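/- Over the Klein group Q = Z_2 ⊕ Z_2 with automorphisms φ_3 = [[1,1],[0,1]], φ_6 = [[0,1],[1,1]], φ_2 = [[1,0],[1,1]], φ_5 = [[1,1],[1,0]], the three ternary operations K_1(x,y,z) = φ_3 x + φ_6 y + a_1 + z, K_2(x,y,z) = φ_2 x + φ_5 y + a_2 + z, K_3(x,y,z) = φ_3 x + φ_5 y + a_3 + z (for any fixed a_1,a_2,a_3 ∈ Q) form an orthogonal system: for any b_1,b_2,b_3 ∈ Q the system K_i(x,y,z) = b_i has the unique solution x = φ_4(b_2+a_2+b_3+a_3), y = b_1+a_1+b_3+a_3, z = b_3+a_3+φ_5(b_1+a_1+b_2+a_2), where φ_4 = [[0,1],[1,0]]. -/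

import Mathlib

/-- The coordinate form of the system over any commutative ring of characteristic two. -/
theorem key_char_two {R : Type*} [CommRing R] (hc : ∀ a : R, a + a = 0)
    (x1 x2 y1 y2 z1 z2 p1 p2 q1 q2 r1 r2 s1 s2 t1 t2 u1 u2 : R) :
    ((x1 + x2 + y2 + p1 + z1 = s1 ∧ x2 + (y1 + y2) + p2 + z2 = s2) ∧
      (x1 + (y1 + y2) + q1 + z1 = t1 ∧ x1 + x2 + y1 + q2 + z2 = t2) ∧
      (x1 + x2 + (y1 + y2) + r1 + z1 = u1 ∧ x2 + y1 + r2 + z2 = u2)) ↔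
    ((x1 = t2 + q2 + u2 + r2 ∧ x2 = t1 + q1 + u1 + r1) ∧
      (y1 = s1 + p1 + u1 + r1 ∧ y2 = s2 + p2 + u2 + r2) ∧
      (z1 = u1 + r1 + (s1 + p1 + t1 + q1 + (s2 + p2 + t2 + q2)) ∧
        z2 = u2 + r2 + (s1 + p1 + t1 + q1))) := by
  have h0 : (1 : R) + 1 = 0 := hc 1
  clear hc
  constructor
  · rintro ⟨⟨h1, h2⟩, ⟨h3, h4⟩, h5, h6⟩
    refine ⟨⟨?_, ?_⟩, ⟨?_, ?_⟩, ?_, ?_⟩ <;> grind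
  · rintro ⟨⟨h1, h2⟩, ⟨h3, h4⟩, h5, h6⟩
    refine ⟨⟨?_, ?_⟩, ⟨?_, ?_⟩, ?_, ?_⟩ <;> grind

/-- Orthogonality of the three ternary operations K₁, K₂, K₃ over the Klein group
F₂²: the system K_i(x,y,z) = b_i has the explicitly given unique solution. The
matrices φ₂,φ₃,φ₄,φ₅,φ₆ act on pairs in the indicated way. -/
theorem ternary_system_unique_solution
    (a₁ a₂ a₃ b₁ b₂ b₃ : ZMod 2 × ZMod 2) :
    let φ₂ : ZMod 2 × ZMod 2 → ZMod 2 × ZMod 2 := fun v => (v.1, v.1 + v.2)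
    let φ₃ : ZMod 2 × ZMod 2 → ZMod 2 × ZMod 2 := fun v => (v.1 + v.2, v.2)
    let φ₄ : ZMod 2 × ZMod 2 → ZMod 2 × ZMod 2 := fun v => (v.2, v.1)
    let φ₅ : ZMod 2 × ZMod 2 → ZMod 2 × ZMod 2 := fun v => (v.1 + v.2, v.1)
    let φ₆ : ZMod 2 × ZMod 2 → ZMod 2 × ZMod 2 := fun v => (v.2, v.1 + v.2)
    ∀ x y z : ZMod 2 × ZMod 2,
      (φ₃ x + φ₆ y + a₁ + z = b₁ ∧ φ₂ x + φ₅ y + a₂ + z = b₂ ∧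
        φ₃ x + φ₅ y + a₃ + z = b₃) ↔
      (x = φ₄ (b₂ + a₂ + b₃ + a₃) ∧ y = b₁ + a₁ + b₃ + a₃ ∧
        z = b₃ + a₃ + φ₅ (b₁ + a₁ + b₂ + a₂)) := by
  intro φ₂ φ₃ φ₄ φ₅ φ₆ x y z
  obtain ⟨x1, x2⟩ := x
  obtain ⟨y1, y2⟩ := y
  obtain ⟨z1, z2⟩ := z
  obtain ⟨p1, p2⟩ := a₁
  obtain ⟨q1, q2⟩ := a₂
  obtain ⟨r1, r2⟩ := a₃
  obtain ⟨s1, s2⟩ := b₁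
  obtain ⟨t1, t2⟩ := b₂
  obtain ⟨u1, u2⟩ := b₃
  simp only [φ₂, φ₃, φ₄, φ₅, φ₆, Prod.mk_add_mk, Prod.mk.injEq]
  have hc : ∀ a : ZMod 2, a + a = 0 := by decide
  exact key_char_two hc _ _ _ _ _ _ _ _ _ _ _ _ _ _ _ _ _ _
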